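/- arXiv:0802.2824 — 2 statements merged into one kernel-verified Lean document; each statement's English description precedes it below -/
import Mathlib

section
/- The dimension of the Gelfand model of G(r,n), i.e. the sum ∑_{χ ∈ Irr(G(r,n))} χ(id) of the dimensions of all irreducible complex representations of G(r,n), equals the number of absolute involutions in G(r,n), i.e. #{ v ∈ G(r,n) : v·v̄ = id }. -/
open Finset CategoryTheory

/-- The wreath product `ℤ_r ≀ S_n`: elements are pairs `(σ, z)` with
`σ` a permutation of `{1,…,n}` and `z ∈ (ℤ/rℤ)^n`.  The multiplication is
`(σ,c)·(τ,d) = (στ, (c_{τ⁻¹(i)} + d_i)_i)`, where in the paper's convention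
permutations compose left-to-right; translated to Lean's convention
(`(σ * τ) x = σ (τ x)`) this reads `(σ,c)·(τ,d) = (σ * τ, fun i => c (τ i) + d i)`,
i.e. the semidirect product of `Fin n → ZMod r` by `Equiv.Perm (Fin n)`
acting by permuting coordinates. -/
def Wreath (r n : ℕ) : Type := Equiv.Perm (Fin n) × (Fin n → ZMod r)

namespace Wreath

variable {r n : ℕ}

instance : Group (Wreath r n) where
  mul v w := ⟨v.1 * w.1, fun i => v.2 (w.1 i) + w.2 i⟩
  one := ⟨1, 0⟩
  inv v := ⟨v.1⁻¹, fun i => -v.2 (v.1⁻¹ i)⟩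
  mul_assoc a b c := Prod.ext (mul_assoc _ _ _) (funext fun i => add_assoc _ _ _)
  one_mul a := by
    refine Prod.ext (one_mul _) (funext fun i => ?_)
    show (0 : Fin n → ZMod r) (a.1 i) + a.2 i = a.2 i
    simp
  mul_one a := by
    refine Prod.ext (mul_one _) (funext fun i => ?_)
    show a.2 ((1 : Equiv.Perm (Fin n)) i) + (0 : Fin n → ZMod r) i = a.2 i
    simp
  inv_mul_cancel a := by
    refine Prod.ext (inv_mul_cancel _) (funext fun i => ?_)
    show -a.2 (a.1⁻¹ (a.1 i)) + a.2 i = (0 : Fin n → ZMod r) i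
    simp

instance [NeZero r] : Fintype (Wreath r n) :=
  inferInstanceAs (Fintype (Equiv.Perm (Fin n) × (Fin n → ZMod r)))

instance : DecidableEq (Wreath r n) :=
  inferInstanceAs (DecidableEq (Equiv.Perm (Fin n) × (Fin n → ZMod r)))

theorem mul_def (v w : Wreath r n) :
    v * w = ⟨v.1 * w.1, fun i => v.2 (w.1 i) + w.2 i⟩ := rfl

theorem one_def : (1 : Wreath r n) = ⟨1, 0⟩ := rfl

theorem inv_def (v : Wreath r n) : v⁻¹ = ⟨v.1⁻¹, fun i => -v.2 (v.1⁻¹ i)⟩ := rfl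

/-- The bar operation `(σ, z) ↦ (σ, −z)`. -/
def bar (v : Wreath r n) : Wreath r n := ⟨v.1, -v.2⟩

theorem bar_mul (v w : Wreath r n) : bar (v * w) = bar v * bar w := by
  refine Prod.ext rfl (funext fun i => ?_)
  show -(v.2 (w.1 i) + w.2 i) = -v.2 (w.1 i) + -w.2 i
  ring

theorem bar_bar (v : Wreath r n) : bar (bar v) = v := by
  refine Prod.ext rfl ?_
  show - - v.2 = v.2
  simp

/-- `bar` as a group automorphism. -/
def barAut : Wreath r n ≃* Wreath r n where
  toFun := bar
  invFun := bar
  left_inv := bar_bar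
  right_inv := bar_bar
  map_mul' := bar_mul

theorem bar_inv (v : Wreath r n) : bar v⁻¹ = (bar v)⁻¹ :=
  map_inv (barAut : Wreath r n ≃* Wreath r n) v

/-- `vᵗ := (v̄)⁻¹`. -/
def tr (v : Wreath r n) : Wreath r n := (bar v)⁻¹

/-- Conjugation `w ↦ π w πᵗ` maps absolute involutions to absolute involutions. -/
theorem conj_absInv {w : Wreath r n} (hw : w * bar w = 1) (π : Wreath r n) :
    (π * w * tr π) * bar (π * w * tr π) = 1 := by
  have h1 : bar (π * w * tr π) = bar π * bar w * π⁻¹ := by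
    rw [bar_mul, bar_mul, tr, bar_inv, bar_bar]
  calc (π * w * tr π) * bar (π * w * tr π)
      = π * (w * bar w) * π⁻¹ := by rw [h1, tr]; group
    _ = 1 := by rw [hw]; group

end Wreath

/-- The set of inversions of `σ`, encoded as ordered pairs `(i,j)` with `i < j`
and `σ j < σ i` (one representative for each unordered pair `{i,j}` with
`(j−i)(σ(j)−σ(i)) < 0`). -/
def invPairs {n : ℕ} (σ : Equiv.Perm (Fin n)) : Finset (Fin n × Fin n) :=
  Finset.univ.filter fun p => p.1 < p.2 ∧ σ p.2 < σ p.1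

/-- The 2-cycles of an involution `u`, encoded as ordered pairs `(i,j)` with `i < j`,
`u i = j` and `u j = i` (one representative for each unordered pair `{i,j}`). -/
def pairSet {n : ℕ} (u : Equiv.Perm (Fin n)) : Finset (Fin n × Fin n) :=
  Finset.univ.filter fun p => p.1 < p.2 ∧ u p.1 = p.2 ∧ u p.2 = p.1

/-- `sign_o(π,w) := (−1)^{#(Inv(|π|) ∩ Pair(|w|))}`. -/
def signO {r n : ℕ} (π w : Wreath r n) : ℤ :=
  (-1) ^ ((invPairs π.1 ∩ pairSet w.1).card)

/-- A family of finite-dimensional complex representations forming a complete set of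
pairwise non-isomorphic irreducible representations of `G`. -/
def IsCompleteIrrFamily {G : Type} [Monoid G] {ι : Type} (V : ι → FDRep ℂ G) : Prop :=
  (∀ i, Simple (V i)) ∧ (∀ i j, Nonempty (V i ≅ V j) → i = j) ∧
    ∀ W : FDRep ℂ G, Simple W → ∃ i, Nonempty (V i ≅ W)


namespace Wreath
variable {r n : ℕ}

/-- projection to the permutation -/
def permHom : Wreath r n →* Equiv.Perm (Fin n) where
  toFun v := v.1
  map_one' := rfl
  map_mul' _ _ := rfl

theorem zpow_fst (g : Wreath r n) (m : ℤ) : (g ^ m).1 = g.1 ^ m :=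
  map_zpow (permHom (r := r) (n := n)) g m

theorem cocycle_add (g : Wreath r n) (a b : ℤ) (x : Fin n) :
    (g ^ (a + b)).2 x = (g ^ a).2 ((g.1 ^ b) x) + (g ^ b).2 x := by
  rw [zpow_add, ← zpow_fst]; rfl

theorem per_perm (s : Equiv.Perm (Fin n)) (a b : ℤ) (x : Fin n)
    (h : (s ^ a) x = (s ^ b) x) : (s ^ (-a)) x = (s ^ (-b)) x := by
  have h2 := congrArg (s ^ (-a - b)) h
  rw [← Equiv.Perm.mul_apply, ← Equiv.Perm.mul_apply, ← zpow_add, ← zpow_add] at h2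
  rw [show -a - b + a = -b by ring, show -a - b + b = -a by ring] at h2
  exact h2.symm

theorem per_cocycle (g : Wreath r n) (a b : ℤ) (x : Fin n)
    (h : (g.1 ^ a) x = (g.1 ^ b) x) :
    (g ^ a).2 x + (g ^ (-a)).2 x = (g ^ b).2 x + (g ^ (-b)).2 x := by
  have h0 : (g.1 ^ (a - b)) x = x := by
    have h2 := congrArg (g.1 ^ (-b)) h
    rw [← Equiv.Perm.mul_apply, ← Equiv.Perm.mul_apply, ← zpow_add, ← zpow_add] at h2
    rw [show -b + a = a - b by ring, show -b + b = 0 by ring] at h2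
    simpa using h2
  have h0' : (g.1 ^ (-(a - b))) x = x := by
    have := congrArg (g.1 ^ (-(a - b))) h0
    rw [← Equiv.Perm.mul_apply, ← zpow_add] at this
    simpa using this.symm
  have e1 := cocycle_add g b (a - b) x
  have e2 := cocycle_add g (-b) (-(a - b)) x
  have e3 := cocycle_add g (a - b) (-(a - b)) x
  rw [h0] at e1
  rw [h0'] at e2 e3
  rw [show b + (a - b) = a by ring] at e1
  rw [show -b + -(a - b) = -a by ring] at e2
  have e4 : (g ^ ((a - b) + -(a - b))).2 x = 0 := by
    rw [show (a - b) + -(a - b) = 0 by ring, zpow_zero]; rfl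
  rw [e4] at e3
  rw [e1, e2]
  linear_combination -e3

theorem exists_conj (g : Wreath r n) (p : Fin n) :
    ∃ h : Wreath r n, h * g = (bar g)⁻¹ * h ∧ h.1 p = p ∧ ∀ i, g.1 i = i → h.1 i = i := by
  classical
  obtain ⟨b, hbp, hb, hbs⟩ : ∃ b : Fin n → Fin n, b p = p ∧ (∀ i, g.1.SameCycle (b i) i) ∧
      ∀ i j, g.1.SameCycle i j → b i = b j := by
    refine ⟨fun i => if g.1.SameCycle p i then p else
      Quotient.out (Quotient.mk (Equiv.Perm.SameCycle.setoid g.1) i), ?_, ?_, ?_⟩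
    · exact if_pos (Equiv.Perm.SameCycle.refl _ _)
    · intro i
      dsimp only
      split_ifs with h
      · exact h
      · exact Quotient.mk_out (s := Equiv.Perm.SameCycle.setoid g.1) i
    · intro i j hij
      dsimp only
      have h1 : g.1.SameCycle p i ↔ g.1.SameCycle p j :=
        ⟨fun h => h.trans hij, fun h => h.trans hij.symm⟩
      have h2 : Quotient.mk (Equiv.Perm.SameCycle.setoid g.1) i =
        Quotient.mk (Equiv.Perm.SameCycle.setoid g.1) j := Quotient.sound hij
      simp only [h1, h2]
  choose m hm using hb
  let t : Fin n → Fin n := fun i => (g.1 ^ (-m i)) (b i)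
  have key : ∀ (i : Fin n) (k : ℤ) (j : Fin n), (g.1 ^ k) (b i) = j →
      t j = (g.1 ^ (-k)) (b i) ∧ b j = b i ∧
      (g ^ (m j)).2 (b j) + (g ^ (-m j)).2 (b j) = (g ^ k).2 (b i) + (g ^ (-k)).2 (b i) := by
    intro i k j hk
    have hbj : b j = b i := by
      apply hbs
      have h1 : g.1.SameCycle (b i) j := ⟨k, hk⟩
      have h2 : g.1.SameCycle (b i) i := ⟨m i, hm i⟩
      exact h1.symm.trans h2
    have hj := hm j
    rw [hbj, ← hk] at hj
    refine ⟨?_, hbj, ?_⟩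
    · show (g.1 ^ (-m j)) (b j) = _
      rw [hbj]
      exact per_perm _ _ _ _ (by rw [hk]; rw [hk] at hj; exact hj)
    · rw [hbj]
      exact per_cocycle _ _ _ _ (by rw [hk]; rw [hk] at hj; exact hj)
  have htt : ∀ i, t (t i) = i := by
    intro i
    have := (key i (-m i) (t i) rfl).1
    rw [this, neg_neg, hm]
  let T : Equiv.Perm (Fin n) := ⟨t, t, htt, htt⟩
  let c : Fin n → ZMod r := fun i => -((g ^ (m i)).2 (b i) + (g ^ (-m i)).2 (b i))
  have hstep : ∀ i, (g.1 ^ (m i + 1)) (b i) = g.1 i := by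
    intro i
    rw [add_comm, zpow_add, zpow_one, Equiv.Perm.mul_apply, hm]
  have hstep2 : ∀ i, (g.1 ^ (-(m i + 1))) (b i) = g.1⁻¹ (t i) := by
    intro i
    rw [neg_add, add_comm, zpow_add, zpow_neg_one, Equiv.Perm.mul_apply]
  refine ⟨⟨T, c⟩, ?_, ?_, ?_⟩
  · refine Prod.ext ?_ ?_
    · ext i
      show ((t (g.1 i) : Fin n) : ℕ) = ((g.1⁻¹ (t i) : Fin n) : ℕ)
      rw [(key i (m i + 1) (g.1 i) (hstep i)).1, hstep2]
    · funext i
      show c (g.1 i) + g.2 i = -(-g.2 (g.1⁻¹ (t i))) + c i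
      have h1 := (key i (m i + 1) (g.1 i) (hstep i)).2.2
      show -((g ^ (m (g.1 i))).2 (b (g.1 i)) + (g ^ (-m (g.1 i))).2 (b (g.1 i))) + g.2 i = 
        -(-g.2 (g.1⁻¹ (t i))) + -((g ^ (m i)).2 (b i) + (g ^ (-m i)).2 (b i))
      rw [h1]
      have h2 := cocycle_add g 1 (m i) (b i)
      have h3 := cocycle_add g 1 (-(m i + 1)) (b i)
      rw [hm, zpow_one, add_comm 1] at h2
      rw [hstep2, zpow_one, show 1 + -(m i + 1) = -m i by ring] at h3
      rw [h2, h3]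
      ring
  · show t p = p
    have := (key p 0 p (by simpa using hbp)).1
    rw [this]; simpa using hbp
  · intro i hi
    show t i = i
    have h1 : ∀ k : ℤ, (g.1 ^ k) i = i := fun k =>
      Equiv.Perm.zpow_apply_eq_self_of_apply_eq_self hi k
    have h2 : b i = i := (g.1 ^ m i).injective ((hm i).trans (h1 (m i)).symm)
    show (g.1 ^ (-m i)) (b i) = i
    rw [h2, h1]

/-- The chain of subgroups. -/
def chain (r n : ℕ) : ℕ → Subgroup (Wreath r n)
  | 0 => ⊥
  | k + 1 =>
    { carrier := {v | ∀ i : Fin n, k ≤ i → v.1 i = i}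
      one_mem' := fun i _ => rfl
      mul_mem' := by
        intro a b ha hb i hi
        show a.1 (b.1 i) = i
        rw [hb i hi, ha i hi]
      inv_mem' := by
        intro a ha i hi
        show a.1⁻¹ i = i
        rw [Equiv.Perm.inv_eq_iff_eq, ha i hi] }

theorem mem_chain_succ (k : ℕ) (v : Wreath r n) :
    v ∈ chain r n (k + 1) ↔ ∀ i : Fin n, k ≤ i → v.1 i = i := Iff.rfl

theorem chain_top : chain r n (n + 1) = ⊤ := by
  rw [eq_top_iff]
  intro v _
  rw [mem_chain_succ]
  intro i hi
  exact absurd i.2 (by omega)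

theorem chain_bar (k : ℕ) (v : Wreath r n) (hv : v ∈ chain r n k) : barAut v ∈ chain r n k := by
  cases k with
  | zero =>
    have : v = 1 := hv
    subst this
    rw [map_one]; exact Subgroup.one_mem _
  | succ k => exact hv

theorem chain_conj (k : ℕ) (g : Wreath r n) (hg : g ∈ chain r n (k + 1)) :
    ∃ h ∈ chain r n k, h * g = (barAut g)⁻¹ * h := by
  cases k with
  | zero =>
    refine ⟨1, Subgroup.one_mem _, ?_⟩
    rw [mem_chain_succ] at hg
    have hg1 : g.1 = 1 := by
      ext i
      rw [hg i (Nat.zero_le _)]; rfl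
    rw [one_mul, mul_one]
    refine Prod.ext ?_ (funext fun i => ?_)
    · show g.1 = g.1⁻¹
      rw [hg1, inv_one]
    · show g.2 i = -(-g.2 (g.1⁻¹ i))
      rw [hg1]; simp
  | succ k =>
    rw [mem_chain_succ] at hg
    by_cases hk : k < n
    · obtain ⟨h, h1, h2, h3⟩ := exists_conj g ⟨k, hk⟩
      refine ⟨h, ?_, h1⟩
      rw [mem_chain_succ]
      intro i hi
      rcases Nat.eq_or_lt_of_le hi with h4 | h4
      · have : i = ⟨k, hk⟩ := Fin.ext h4.symm
        rw [this, h2]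
      · exact h3 i (hg i h4)
    · rcases isEmpty_or_nonempty (Fin n) with hE | ⟨⟨p⟩⟩
      · exact ⟨1, Subgroup.one_mem _, Prod.ext (Subsingleton.elim _ _) (Subsingleton.elim _ _)⟩
      · obtain ⟨h, h1, h2, h3⟩ := exists_conj g p
        refine ⟨h, ?_, h1⟩
        rw [mem_chain_succ]
        intro i hi
        exact absurd i.2 (by omega)

end Wreath

section RepPart

open Module

variable {G : Type} [Group G] [Fintype G] {V : Type} [AddCommGroup V] [Module ℂ V]
  [FiniteDimensional ℂ V]

/-- Burnside. -/
theorem burnside_span (ρ : Representation ℂ G V) [ρ.IsIrreducible] (T : V →ₗ[ℂ] V) :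
    ∃ c : G → ℂ, ∀ v, T v = ∑ g, c g • ρ g v := by
  classical
  let A := MonoidAlgebra ℂ G
  have hs : Function.Bijective (algebraMap ℂ (Module.End A ρ.asModule)) :=
    IsSimpleModule.algebraMap_end_bijective_of_isAlgClosed ℂ
  let f : Module.End (Module.End A ρ.asModule) ρ.asModule :=
    { toFun := fun v => ρ.asModuleEquiv.symm (T (ρ.asModuleEquiv v))
      map_add' := by intro x y; simp
      map_smul' := by
        intro φ x
        obtain ⟨t, rfl⟩ := hs.2 φ
        have : ∀ y : ρ.asModule, (algebraMap ℂ (Module.End A ρ.asModule) t) • y = t • y := by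
          intro y; rfl
        rw [RingHom.id_apply, this, this]
        simp }
  obtain ⟨a, ha⟩ := jacobson_density f
    (Finset.univ.image (fun i => ρ.asModuleEquiv.symm (Module.finBasis ℂ V i)))
  have hT : T = ρ.asAlgebraHom a := by
    refine (Module.finBasis ℂ V).ext fun i => ?_
    have := ha (ρ.asModuleEquiv.symm (Module.finBasis ℂ V i)) (by simp)
    have := congrArg ρ.asModuleEquiv this
    rw [Representation.asModuleEquiv_map_smul] at this
    simpa [f] using this
  have hspan : ∀ a : MonoidAlgebra ℂ G, ∃ c : G → ℂ, ∀ v, ρ.asAlgebraHom a v =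
      ∑ g, c g • ρ g v := by
    intro a
    induction a using MonoidAlgebra.induction_linear with
    | zero => exact ⟨0, by simp⟩
    | add x y hx hy =>
      obtain ⟨c, hc⟩ := hx
      obtain ⟨d, hd⟩ := hy
      exact ⟨c + d, fun v => by simp [hc, hd, add_smul, Finset.sum_add_distrib]⟩
    | single g t =>
      exact ⟨Pi.single g t, fun v => by simp [Pi.single_apply, ite_smul]⟩
  rw [hT]
  exact hspan a

/-- invariance of a subspace under a subgroup -/
def InvSub (ρ : Representation ℂ G V) (H : Subgroup G) (U : Submodule ℂ V) : Prop :=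
  ∀ h ∈ H, ∀ u ∈ U, ρ h u ∈ U

/-- irreducible subspace under a subgroup -/
def IrrSub (ρ : Representation ℂ G V) (H : Subgroup G) (U : Submodule ℂ V) : Prop :=
  InvSub ρ H U ∧ U ≠ ⊥ ∧ ∀ Y ≤ U, InvSub ρ H Y → Y = ⊥ ∨ Y = U

/-- restriction to an invariant subspace -/
def restrRep (ρ : Representation ℂ G V) (H : Subgroup G) (U : Submodule ℂ V)
    (hU : InvSub ρ H U) : Representation ℂ H U where
  toFun h := (ρ h).restrict (hU h h.2)
  map_one' := by ext; simp
  map_mul' x y := by ext; simp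

theorem restrRep_irr (ρ : Representation ℂ G V) (H : Subgroup G) (U : Submodule ℂ V)
    (hU : IrrSub ρ H U) : (restrRep ρ H U hU.1).IsIrreducible := by
  have hne : ∃ u ∈ U, u ≠ 0 := Submodule.exists_mem_ne_zero_of_ne_bot hU.2.1
  obtain ⟨u, hu, hu0⟩ := hne
  refine { exists_pair_ne := ⟨⊥, ⊤, ?_⟩, eq_bot_or_eq_top := ?_ }
  · intro h
    have h1 : (⟨u, hu⟩ : U) ∈ (⊤ : Subrepresentation (restrRep ρ H U hU.1)) := by
      show _ ∈ (⊤ : Submodule ℂ U); trivial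
    rw [← h] at h1
    have h2 : (⟨u, hu⟩ : U) ∈ (⊥ : Submodule ℂ U) := h1
    rw [Submodule.mem_bot] at h2
    exact hu0 (congrArg Subtype.val h2)
  · intro Y
    have h1 := hU.2.2 (Y.toSubmodule.map U.subtype) (Submodule.map_subtype_le _ _) (by
      rintro h hh _ ⟨y, hy, rfl⟩
      exact ⟨_, Y.apply_mem_toSubmodule ⟨h, hh⟩ hy, rfl⟩)
    rcases h1 with h1 | h1
    · left
      apply Subrepresentation.toSubmodule_injective
      show Y.toSubmodule = ⊥
      rw [eq_bot_iff]
      intro y hy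
      have h3 : U.subtype y ∈ Y.toSubmodule.map U.subtype := ⟨y, hy, rfl⟩
      rw [h1, Submodule.mem_bot] at h3
      exact (Submodule.mem_bot ℂ).2 (Subtype.ext h3)
    · right
      apply Subrepresentation.toSubmodule_injective
      show Y.toSubmodule = ⊤
      rw [eq_top_iff]
      rintro ⟨x, hx⟩ _
      rw [← h1] at hx
      obtain ⟨y, hy, hyx⟩ := hx
      have : (⟨x, by rw [← hyx]; exact y.2⟩ : U) = y := Subtype.ext hyx.symm
      rw [this]
      exact hy

theorem burnside_sub (ρ : Representation ℂ G V) (H : Subgroup G) (U : Submodule ℂ V)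
    (hU : IrrSub ρ H U) (T : V →ₗ[ℂ] V) (hT : ∀ u ∈ U, T u ∈ U) :
    ∃ c : H → ℂ, ∀ u ∈ U, T u = ∑ᶠ h : H, c h • ρ h u := by
  classical
  have := restrRep_irr ρ H U hU
  obtain ⟨c, hc⟩ := burnside_span (restrRep ρ H U hU.1) (T.restrict hT)
  refine ⟨c, fun u hu => ?_⟩
  rw [finsum_eq_sum_of_fintype]
  have := congrArg Subtype.val (hc ⟨u, hu⟩)
  simpa [restrRep] using this

theorem equivariant_proj (ρ : Representation ℂ G V) (H : Subgroup G) (Y : Submodule ℂ V)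
    (hY : InvSub ρ H Y) : ∃ p : V →ₗ[ℂ] V, (∀ v, p v ∈ Y) ∧ (∀ y ∈ Y, p y = y) ∧
      ∀ h ∈ H, ∀ v, p (ρ h v) = ρ h (p v) := by
  classical
  obtain ⟨q, hq⟩ := Y.subtype.exists_leftInverse_of_injective (by simp)
  have hq' : ∀ y ∈ Y, ((q y : Y) : V) = y := fun y hy => by
    have := LinearMap.congr_fun hq ⟨y, hy⟩
    exact congrArg Subtype.val this
  have hc : (Fintype.card H : ℂ) ≠ 0 := Nat.cast_ne_zero.mpr Fintype.card_ne_zero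
  refine ⟨(Fintype.card H : ℂ)⁻¹ • ∑ h : H, (ρ h) ∘ₗ (Y.subtype ∘ₗ q) ∘ₗ (ρ (h⁻¹ : H)), ?_, ?_, ?_⟩
  · intro v
    simp only [LinearMap.smul_apply, LinearMap.sum_apply, LinearMap.comp_apply]
    exact Y.smul_mem _ (Y.sum_mem fun h _ => hY _ h.2 _ (q _).2)
  · intro y hy
    simp only [LinearMap.smul_apply, LinearMap.sum_apply, LinearMap.comp_apply]
    have : ∀ h : H, ρ h (Y.subtype (q (ρ (h⁻¹ : H) y))) = y := by
      intro h
      rw [Submodule.subtype_apply, hq' _ (hY _ (h⁻¹).2 _ hy)]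
      rw [← Module.End.mul_apply, ← map_mul]; simp
    rw [Finset.sum_congr rfl fun h _ => this h]
    rw [Finset.sum_const, Finset.card_univ, ← Nat.cast_smul_eq_nsmul ℂ, smul_smul,
      inv_mul_cancel₀ hc, one_smul]
  · intro k hk v
    simp only [LinearMap.smul_apply, LinearMap.sum_apply, LinearMap.comp_apply, map_smul, map_sum]
    congr 1
    refine Fintype.sum_equiv (Equiv.mulLeft (⟨k, hk⟩⁻¹ : H)) _ _ fun h => ?_
    have e1 : ρ (h⁻¹ : H) (ρ k v) = ρ (((⟨k, hk⟩⁻¹ * h)⁻¹ : H)) v := by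
      rw [← Module.End.mul_apply, ← map_mul]; simp
    rw [e1]
    simp only [Equiv.coe_mulLeft]
    rw [← Module.End.mul_apply (ρ k), ← map_mul]; simp

/-- Elements of the commutant of `K` acting on an irreducible `H`-space are self adjoint. -/
theorem selfadj (ρ : Representation ℂ G V) (θ : G ≃* G) (H K : Subgroup G)
    (hθ : ∀ k ∈ K, θ k ∈ K)
    (hconj : ∀ g ∈ H, ∃ h ∈ K, h * g = (θ g)⁻¹ * h)
    (B : V → V → ℂ) (hBadd : ∀ u v w, B (u + v) w = B u w + B v w)
    (hBsmul : ∀ (c : ℂ) u w, B (c • u) w = c * B u w)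
    (hBadd' : ∀ u v w, B w (u + v) = B w u + B w v)
    (hBsmul' : ∀ (c : ℂ) u w, B w (c • u) = c * B w u)
    (hB : ∀ g v w, B (ρ g v) w = B v (ρ ((θ g)⁻¹) w))
    (U : Submodule ℂ V) (hU : IrrSub ρ H U) (hUK : InvSub ρ K U)
    (p : V →ₗ[ℂ] V) (hpU : ∀ u ∈ U, p u ∈ U)
    (hp : ∀ h ∈ K, ∀ v, p (ρ h v) = ρ h (p v)) :
    ∀ u ∈ U, ∀ w ∈ U, B (p u) w = B u (p w) := by
  classical
  obtain ⟨c, hc⟩ := burnside_sub ρ H U hU p hpU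
  simp only [finsum_eq_sum_of_fintype] at hc
  intro u hu w hw
  have hBL : ∀ (ι : Type) [Fintype ι] (f : ι → V) (w : V), B (∑ i, f i) w = ∑ i, B (f i) w := by
    intro ι _ f w
    exact map_sum (AddMonoidHom.mk' (fun v => B v w) (fun a b => hBadd a b w)) f Finset.univ
  have hBR : ∀ (ι : Type) [Fintype ι] (f : ι → V) (w : V), B w (∑ i, f i) = ∑ i, B w (f i) := by
    intro ι _ f w
    exact map_sum (AddMonoidHom.mk' (fun v => B w v) (fun a b => hBadd' a b w)) f Finset.univ
  have hcard : (Fintype.card K : ℂ) ≠ 0 := Nat.cast_ne_zero.mpr Fintype.card_ne_zero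
  have key : ∀ (k : K) (v), v ∈ U → p v = ∑ h : H, c h • ρ (k * h * (k : G)⁻¹) v := by
    intro k v hv
    have h1 : p v = ρ k (p (ρ ((k : G)⁻¹) v)) := by
      rw [← hp k k.2, ← Module.End.mul_apply (ρ k), ← map_mul]; simp
    rw [h1, hc _ (hUK _ (K.inv_mem k.2) _ hv), map_sum]
    refine Finset.sum_congr rfl fun h _ => ?_
    rw [map_smul, map_mul, map_mul]; rfl
  have hL : (Fintype.card K : ℂ) * B (p u) w =
      ∑ h : H, c h * ∑ k : K, B u (ρ ((θ (k * h * (k : G)⁻¹))⁻¹) w) := by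
    have : ∀ k : K, B (p u) w = ∑ h : H, c h * B u (ρ ((θ (k * h * (k : G)⁻¹))⁻¹) w) := by
      intro k
      rw [key k u hu, hBL]
      exact Finset.sum_congr rfl fun h _ => by rw [hBsmul, hB]
    simp_rw [Finset.mul_sum]
    rw [Finset.sum_comm, ← Finset.sum_congr rfl fun k _ => this k]
    simp
  have hR : (Fintype.card K : ℂ) * B u (p w) =
      ∑ h : H, c h * ∑ k : K, B u (ρ (k * h * (k : G)⁻¹) w) := by
    have : ∀ k : K, B u (p w) = ∑ h : H, c h * B u (ρ (k * h * (k : G)⁻¹) w) := by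
      intro k
      rw [key k w hw, hBR]
      exact Finset.sum_congr rfl fun h _ => by rw [hBsmul']
    simp_rw [Finset.mul_sum]
    rw [Finset.sum_comm, ← Finset.sum_congr rfl fun k _ => this k]
    simp
  apply mul_left_cancel₀ hcard
  rw [hL, hR]
  refine Finset.sum_congr rfl fun h _ => ?_
  congr 1
  obtain ⟨x, hxK, hx⟩ := hconj h h.2
  have hinj : Function.Injective (fun k : K => (⟨θ k * x, K.mul_mem (hθ k k.2) hxK⟩ : K)) := by
    intro a b hab
    have := congrArg Subtype.val hab
    exact Subtype.ext (θ.injective (mul_right_cancel this))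
  refine Fintype.sum_bijective _ (Finite.injective_iff_bijective.mp hinj) _ _ fun k => ?_
  congr 3
  have hx' : (θ h)⁻¹ = x * h * x⁻¹ := by rw [hx]; group
  simp only [map_mul, map_inv, mul_inv_rev, inv_inv]
  rw [hx']; group

theorem form_symm (ρ : Representation ℂ G V) (θ : G ≃* G) (C : ℕ → Subgroup G)
    (hC0 : C 0 = ⊥) (hθ : ∀ i, ∀ k ∈ C i, θ k ∈ C i)
    (hCle : ∀ i, C i ≤ C (i + 1))
    (hconj : ∀ i, ∀ g ∈ C (i + 1), ∃ h ∈ C i, h * g = (θ g)⁻¹ * h)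
    (B : V → V → ℂ) (hBadd : ∀ u v w, B (u + v) w = B u w + B v w)
    (hBsmul : ∀ (c : ℂ) u w, B (c • u) w = c * B u w)
    (hBadd' : ∀ u v w, B w (u + v) = B w u + B w v)
    (hBsmul' : ∀ (c : ℂ) u w, B w (c • u) = c * B w u)
    (hB : ∀ g v w, B (ρ g v) w = B v (ρ ((θ g)⁻¹) w)) :
    ∀ i, ∀ U : Submodule ℂ V, IrrSub ρ (C i) U → ∀ u ∈ U, ∀ w ∈ U, B u w = B w u := by
  intro i
  induction i with
  | zero =>
    intro U hU u hu w hw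
    by_cases hu0 : u = 0
    · have h1 : ∀ w, B 0 w = 0 := fun w => by simpa using hBsmul 0 0 w
      have h2 : ∀ w, B w 0 = 0 := fun w => by simpa using hBsmul' 0 0 w
      rw [hu0, h1, h2]
    · have h1 := hU.2.2 (Submodule.span ℂ {u}) (by simpa using hu) (by
        intro h hh v hv
        rw [hC0] at hh
        rw [Subgroup.mem_bot] at hh
        simpa [hh] using hv)
      rcases h1 with h1 | h1
      · simp at h1; exact absurd h1 hu0
      · rw [← h1, Submodule.mem_span_singleton] at hw
        obtain ⟨a, rfl⟩ := hw
        rw [hBsmul, hBsmul']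
  | succ i ih =>
    intro U hU
    have hUK : InvSub ρ (C i) U := fun h hh => hU.1 h (hCle i hh)
    have main : ∀ (d : ℕ) (X : Submodule ℂ V), finrank ℂ X = d → X ≤ U → InvSub ρ (C i) X →
        ∀ u ∈ X, ∀ w ∈ X, B u w = B w u := by
      intro d
      induction d using Nat.strong_induction_on with
      | _ d ihd =>
      intro X hd hXU hX
      by_cases hirr : IrrSub ρ (C i) X
      · exact ih X hirr
      · by_cases hX0 : X = ⊥
        · intro u hu w hw
          rw [hX0, Submodule.mem_bot] at hu hw
          rw [hu, hw]
        · have : ∃ Y ≤ X, InvSub ρ (C i) Y ∧ Y ≠ ⊥ ∧ Y ≠ X := by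
            by_contra hcon
            push Not at hcon
            apply hirr
            refine ⟨hX, hX0, fun Y hY hYi => ?_⟩
            by_cases hY0 : Y = ⊥
            · exact Or.inl hY0
            · exact Or.inr (hcon Y hY hYi hY0)
          obtain ⟨Y, hYX, hYi, hY0, hYne⟩ := this
          obtain ⟨p, hp1, hp2, hp3⟩ := equivariant_proj ρ (C i) Y hYi
          have hsa := selfadj ρ θ (C (i + 1)) (C i) (hθ i) (hconj i) B hBadd hBsmul hBadd' hBsmul'
            hB U hU hUK p (fun u _ => hXU (hYX (hp1 u))) hp3
          have h2 : ∀ w, B w 0 = 0 := fun w => by simpa using hBsmul' 0 0 w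
          have h1 : ∀ w, B 0 w = 0 := fun w => by simpa using hBsmul 0 0 w
          let Z : Submodule ℂ V := LinearMap.ker p ⊓ X
          have hZX : Z ≤ X := inf_le_right
          have hZi : InvSub ρ (C i) Z := by
            intro h hh z hz
            have hz1 : p z = 0 := hz.1
            refine ⟨?_, hX h hh z hz.2⟩
            show p (ρ h z) = 0
            rw [hp3 h hh, hz1, map_zero]
          have hZne : Z ≠ X := by
            intro hZ
            apply hY0
            rw [eq_bot_iff]
            intro y hy
            have : y ∈ Z := hZ ▸ hYX hy
            have h3 : p y = 0 := this.1
            rw [hp2 y hy] at h3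
            exact h3
          have hYlt : finrank ℂ Y < d := hd ▸ Submodule.finrank_lt_finrank_of_lt
            (lt_of_le_of_ne hYX hYne)
          have hZlt : finrank ℂ Z < d := hd ▸ Submodule.finrank_lt_finrank_of_lt
            (lt_of_le_of_ne hZX hZne)
          have hYs := ihd _ hYlt Y rfl (hYX.trans hXU) hYi
          have hZs := ihd _ hZlt Z rfl (hZX.trans hXU) hZi
          have hYZ : ∀ y ∈ Y, ∀ z ∈ Z, B y z = 0 ∧ B z y = 0 := by
            intro y hy z hz
            have hz1 : p z = 0 := hz.1
            have e1 := hsa y (hXU (hYX hy)) z (hXU (hZX hz))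
            have e2 := hsa z (hXU (hZX hz)) y (hXU (hYX hy))
            rw [hp2 y hy, hz1, h2] at e1
            rw [hp2 y hy, hz1, h1] at e2
            exact ⟨e1, e2.symm⟩
          have hdec : ∀ x ∈ X, ∃ y ∈ Y, ∃ z ∈ Z, x = y + z := by
            intro x hx
            refine ⟨p x, hp1 x, x - p x, ⟨?_, X.sub_mem hx (hYX (hp1 x))⟩, by abel⟩
            show p (x - p x) = 0
            rw [map_sub, hp2 _ (hp1 x), sub_self]
          intro u hu w hw
          obtain ⟨y, hy, z, hz, rfl⟩ := hdec u hu
          obtain ⟨y', hy', z', hz', rfl⟩ := hdec w hw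
          simp only [hBadd, hBadd']
          rw [(hYZ y hy z' hz').1, (hYZ y' hy' z hz).1, (hYZ y hy z' hz').2, (hYZ y' hy' z hz).2,
            hYs y hy y' hy', hZs z hz z' hz']
    exact main _ U rfl le_rfl hUK

end RepPart

section FinalPart

open Module

variable {G : Type} [Group G] [Fintype G]

theorem char_norm (V : FDRep ℂ G) [Simple V] :
    ∑ g : G, V.character g * V.character g⁻¹ = (Fintype.card G : ℂ) := by
  rw [(FDRep.simple_iff_char_is_norm_one V).mp inferInstance, Nat.card_eq_fintype_card]

theorem simple_irrSub (V : FDRep ℂ G) [Simple V] :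
    IrrSub (V := V) V.ρ ⊤ ⊤ := by
  have hcard : (Nat.card G : ℂ) ≠ 0 := Nat.cast_ne_zero.mpr Nat.card_pos.ne'
  letI : Invertible (Nat.card G : ℂ) := invertibleOfNonzero hcard
  have h1 : (finrank ℂ (Representation.IntertwiningMap V.ρ V.ρ) : ℂ) = 1 := by
    rw [← Representation.card_inv_mul_sum_char_mul_char_eq_finrank]
    have := (FDRep.simple_iff_char_is_norm_one V).mp inferInstance
    rw [show (∑ g : G, Representation.character V.ρ g * Representation.character V.ρ g⁻¹) =
      ∑ g : G, V.character g * V.character g⁻¹ from rfl, this, inv_mul_cancel₀ hcard]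
  have h1 : finrank ℂ (Representation.IntertwiningMap V.ρ V.ρ) = 1 := by exact_mod_cast h1
  let I : Representation.IntertwiningMap V.ρ V.ρ := ⟨LinearMap.id, fun g => rfl⟩
  have hI : I ≠ 0 := by
    intro h0
    have hz : ∀ J : Representation.IntertwiningMap V.ρ V.ρ, J = 0 := by
      intro J
      ext v
      have e : I v = 0 := by rw [h0]; rfl
      have e' : v = 0 := e
      rw [e']; simp
    have : Subsingleton (Representation.IntertwiningMap V.ρ V.ρ) :=
      ⟨fun a b => (hz a).trans (hz b).symm⟩
    rw [finrank_zero_of_subsingleton] at h1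
    exact absurd h1 (by norm_num)
  refine ⟨fun _ _ _ _ => trivial, ?_, ?_⟩
  · intro h
    apply hI
    ext v
    have : v ∈ (⊤ : Submodule ℂ V) := trivial
    rw [h, Submodule.mem_bot] at this
    rw [this]; simp
  · intro Y _ hY
    obtain ⟨p, hp1, hp2, hp3⟩ := equivariant_proj (V := V) V.ρ ⊤ Y hY
    let P : Representation.IntertwiningMap V.ρ V.ρ := ⟨p, fun g => by
      ext v; exact hp3 g trivial v⟩
    obtain ⟨c, hc⟩ := (finrank_eq_one_iff_of_nonzero' I hI).mp h1 P
    have hc' : ∀ v, c • v = p v := fun v => congrArg (fun J => J v) hc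
    by_cases hc0 : c = 0
    · left
      rw [eq_bot_iff]
      intro y hy
      have := hc' y
      rw [hp2 y hy, hc0, zero_smul] at this
      exact this.symm
    · right
      rw [eq_top_iff]
      intro v _
      have h2 := hp1 v
      rw [← hc'] at h2
      have := Y.smul_mem c⁻¹ h2
      rwa [smul_smul, inv_mul_cancel₀ hc0, one_smul] at this

theorem twisted_fs (V : FDRep ℂ G) [Simple V] (θ : G ≃* G) (C : ℕ → Subgroup G)
    (hC0 : C 0 = ⊥) (hθ : ∀ i, ∀ k ∈ C i, θ k ∈ C i)
    (hCle : ∀ i, C i ≤ C (i + 1))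
    (hconj : ∀ i, ∀ g ∈ C (i + 1), ∃ h ∈ C i, h * g = (θ g)⁻¹ * h)
    (N : ℕ) (hN : C (N + 1) = ⊤) :
    ∑ g : G, V.character (g * θ g) = (Fintype.card G : ℂ) := by
  classical
  have hch : ∀ g, V.character (θ g) = V.character g⁻¹ := by
    intro g
    obtain ⟨h, -, hh⟩ := hconj N g (by rw [hN]; trivial)
    have : θ g = h * g⁻¹ * h⁻¹ := by
      have e : (θ g)⁻¹ = h * g * h⁻¹ := by rw [hh]; group
      rw [← inv_inv (θ g), e]; group
    rw [this, FDRep.char_conj]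
  let b := finBasis ℂ V
  have hmain : ∀ i j, ∑ g : G, b.coord i (V.ρ g (b i)) * b.coord j (V.ρ (θ g) (b j)) =
      ∑ g : G, b.coord i (V.ρ g (b j)) * b.coord j (V.ρ (θ g) (b i)) := by
    intro i j
    refine form_symm (V := V) V.ρ θ C hC0 hθ hCle hconj
      (fun u w => ∑ g : G, b.coord i (V.ρ g u) * b.coord j (V.ρ (θ g) w)) ?_ ?_ ?_ ?_ ?_ (N + 1) ⊤
      ?_ (b i) trivial (b j) trivial
    · intro u v w
      simp only [map_add, add_mul, Finset.sum_add_distrib]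
    · intro c u w
      simp only [map_smul, smul_eq_mul, Finset.mul_sum, mul_assoc]
    · intro u v w
      simp only [map_add, mul_add, Finset.sum_add_distrib]
    · intro c u w
      simp only [map_smul, smul_eq_mul, Finset.mul_sum]
      exact Finset.sum_congr rfl fun g _ => by ring
    · intro k v w
      refine Fintype.sum_equiv (Equiv.mulRight k) _ _ fun g => ?_
      simp only [Equiv.coe_mulRight]
      rw [map_mul V.ρ g k, map_mul θ, Module.End.mul_apply]
      rw [← Module.End.mul_apply (V.ρ (θ g * θ k)), ← map_mul]
      simp
    · rw [hN]; exact simple_irrSub V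
  have htr : ∀ g, V.character g = ∑ i, b.coord i (V.ρ g (b i)) := by
    intro g
    rw [FDRep.character, LinearMap.trace_eq_matrix_trace ℂ b, Matrix.trace]
    exact Finset.sum_congr rfl fun i _ => by simp [LinearMap.toMatrix_apply]
  have htr2 : ∀ g, V.character (g * θ g) =
      ∑ i, ∑ j, b.coord i (V.ρ g (b j)) * b.coord j (V.ρ (θ g) (b i)) := by
    intro g
    rw [FDRep.character, LinearMap.trace_eq_matrix_trace ℂ b, map_mul, LinearMap.toMatrix_mul,
      Matrix.trace]
    exact Finset.sum_congr rfl fun i _ => by simp [LinearMap.toMatrix_apply, Matrix.mul_apply]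
  rw [← char_norm V]
  simp_rw [← hch]
  simp_rw [htr2]
  simp_rw [htr, Finset.sum_mul_sum]
  rw [Finset.sum_comm]
  conv_rhs => rw [Finset.sum_comm]
  refine Finset.sum_congr rfl fun i _ => ?_
  rw [Finset.sum_comm]
  conv_rhs => rw [Finset.sum_comm]
  exact Finset.sum_congr rfl fun j _ => (hmain i j).symm

theorem irr_simple {W : Type} [AddCommGroup W] [Module ℂ W] [FiniteDimensional ℂ W]
    (ρ : Representation ℂ G W) [ρ.IsIrreducible] : Simple (FDRep.of ρ) := by
  classical
  have hcard : (Nat.card G : ℂ) ≠ 0 := Nat.cast_ne_zero.mpr Nat.card_pos.ne'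
  letI : Invertible (Nat.card G : ℂ) := invertibleOfNonzero hcard
  rw [FDRep.simple_iff_char_is_norm_one]
  have := Representation.char_orthonormal ρ ρ
  rw [if_pos ⟨Representation.Equiv.refl ρ⟩, inv_mul_eq_one₀ hcard] at this
  exact this.symm

theorem class_fun_irr {W : Type} [AddCommGroup W] [Module ℂ W] [FiniteDimensional ℂ W]
    (ρ : Representation ℂ G W) [ρ.IsIrreducible] (f : G → ℂ)
    (hf : ∀ g h, f (h * g * h⁻¹) = f g) (h0 : ∑ g, f g * ρ.character g⁻¹ = 0) (w : W) :
    ∑ g, f g • ρ g⁻¹ w = 0 := by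
  let P : Representation.IntertwiningMap ρ ρ := ⟨∑ g, f g • ρ g⁻¹, fun k => by
    ext v
    simp only [LinearMap.comp_apply, LinearMap.sum_apply, LinearMap.smul_apply, map_sum, map_smul]
    refine Fintype.sum_equiv (MulAut.conj k).toEquiv.symm _ _ fun g => ?_
    have e : (MulAut.conj k).toEquiv.symm g = k⁻¹ * g * k := by simp
    rw [e]
    have := hf g k⁻¹
    rw [inv_inv] at this
    rw [this]
    congr 1
    rw [← Module.End.mul_apply, ← Module.End.mul_apply, ← map_mul, ← map_mul]
    congr 2; group⟩
  obtain ⟨c, hc⟩ := (Representation.IsIrreducible.algebraMap_intertwiningMap_bijective_of_isAlgClosed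
    (ρ := ρ)).2 P
  have hc' : ∀ v, c • v = ∑ g, f g • ρ g⁻¹ v := by
    intro v
    have := congrArg (fun J => J v) hc
    simpa [P] using this
  have hlin : c • (LinearMap.id : W →ₗ[ℂ] W) = ∑ g, f g • ρ g⁻¹ := by
    ext v; simpa using hc' v
  have ht := congrArg (LinearMap.trace ℂ W) hlin
  simp only [map_smul, map_sum, LinearMap.trace_id, smul_eq_mul] at ht
  have : c * (finrank ℂ W : ℂ) = 0 := ht.trans h0
  rcases mul_eq_zero.mp this with h | h
  · rw [← hc', h, zero_smul]
  · have h' : finrank ℂ W = 0 := by exact_mod_cast h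
    have := finrank_zero_iff.mp h'
    exact Subsingleton.elim _ _

theorem class_fun_zero {V : Type} [AddCommGroup V] [Module ℂ V] [FiniteDimensional ℂ V]
    (ρ : Representation ℂ G V) (f : G → ℂ)
    (hirr : ∀ U : Submodule ℂ V, IrrSub ρ ⊤ U → ∀ u ∈ U, ∑ g, f g • ρ g⁻¹ u = 0) (v : V) :
    ∑ g, f g • ρ g⁻¹ v = 0 := by
  have main : ∀ (d : ℕ) (X : Submodule ℂ V), finrank ℂ X = d → InvSub ρ ⊤ X →
        ∀ u ∈ X, ∑ g, f g • ρ g⁻¹ u = 0 := by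
    intro d
    induction d using Nat.strong_induction_on with
    | _ d ihd =>
    intro X hd hX
    by_cases hi : IrrSub ρ ⊤ X
    · exact hirr X hi
    by_cases hX0 : X = ⊥
    · intro u hu
      rw [hX0, Submodule.mem_bot] at hu
      simp [hu]
    have : ∃ Y ≤ X, InvSub ρ ⊤ Y ∧ Y ≠ ⊥ ∧ Y ≠ X := by
      by_contra hcon
      push Not at hcon
      apply hi
      refine ⟨hX, hX0, fun Y hY hYi => ?_⟩
      by_cases hY0 : Y = ⊥
      · exact Or.inl hY0
      · exact Or.inr (hcon Y hY hYi hY0)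
    obtain ⟨Y, hYX, hYi, hY0, hYne⟩ := this
    obtain ⟨p, hp1, hp2, hp3⟩ := equivariant_proj ρ ⊤ Y hYi
    let Z : Submodule ℂ V := LinearMap.ker p ⊓ X
    have hZX : Z ≤ X := inf_le_right
    have hZi : InvSub ρ ⊤ Z := by
      intro h hh z hz
      have hz1 : p z = 0 := hz.1
      refine ⟨?_, hX h hh z hz.2⟩
      show p (ρ h z) = 0
      rw [hp3 h hh, hz1, map_zero]
    have hZne : Z ≠ X := by
      intro hZ
      apply hY0
      rw [eq_bot_iff]
      intro y hy
      have : y ∈ Z := hZ ▸ hYX hy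
      have h3 : p y = 0 := this.1
      rw [hp2 y hy] at h3
      exact h3
    have hYlt : finrank ℂ Y < d := hd ▸ Submodule.finrank_lt_finrank_of_lt
      (lt_of_le_of_ne hYX hYne)
    have hZlt : finrank ℂ Z < d := hd ▸ Submodule.finrank_lt_finrank_of_lt
      (lt_of_le_of_ne hZX hZne)
    intro x hx
    have hz : x - p x ∈ Z := by
      refine ⟨?_, X.sub_mem hx (hYX (hp1 x))⟩
      show p (x - p x) = 0
      rw [map_sub, hp2 _ (hp1 x), sub_self]
    have e1 := ihd _ hYlt Y rfl hYi _ (hp1 x)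
    have e2 := ihd _ hZlt Z rfl hZi _ hz
    have e3 : x = p x + (x - p x) := by abel
    rw [e3]
    simp only [map_add, smul_add, Finset.sum_add_distrib]
    rw [e1, e2, add_zero]
  exact main _ ⊤ rfl (fun _ _ _ _ => trivial) v trivial

theorem regular_char {ι : Type} [Fintype ι] (V : ι → FDRep ℂ G) (hV : IsCompleteIrrFamily V)
    (g : G) [DecidableEq G] :
    ∑ i, (V i).character 1 * (V i).character g = if g = 1 then (Fintype.card G : ℂ) else 0 := by
  classical
  have hcard : (Nat.card G : ℂ) ≠ 0 := Nat.cast_ne_zero.mpr Nat.card_pos.ne'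
  letI : Invertible (Nat.card G : ℂ) := invertibleOfNonzero hcard
  obtain ⟨hs, hinj, hall⟩ := hV
  let f : G → ℂ := fun g => ∑ i, (V i).character 1 * (V i).character g -
    if g = 1 then (Fintype.card G : ℂ) else 0
  have hf : ∀ g h, f (h * g * h⁻¹) = f g := by
    intro g h
    simp only [f, FDRep.char_conj]
    simp
  have hzero : ∀ j, ∑ g, f g * (V j).character g⁻¹ = 0 := by
    intro j
    have := hs j
    have horth : ∀ i, ∑ g, (V i).character g * (V j).character g⁻¹ =
        if i = j then (Fintype.card G : ℂ) else 0 := by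
      intro i
      have := hs i
      have h := FDRep.char_orthonormal (V i) (V j)
      rw [inv_mul_eq_iff_eq_mul₀ hcard] at h
      rw [h]
      by_cases hij : i = j
      · subst hij
        rw [if_pos ⟨Iso.refl _⟩, if_pos rfl]; simp
      · rw [if_neg (fun hh => hij (hinj i j hh)), if_neg hij]; simp
    simp only [f, sub_mul, Finset.sum_sub_distrib, Finset.sum_mul]
    rw [Finset.sum_comm]
    simp_rw [mul_assoc, ← Finset.mul_sum, horth]
    simp [mul_comm]
  have hzero' : ∀ {W : Type} [AddCommGroup W] [Module ℂ W] [FiniteDimensional ℂ W]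
      (ρ : Representation ℂ G W) [ρ.IsIrreducible], ∑ g, f g * ρ.character g⁻¹ = 0 := by
    intro W _ _ _ ρ _
    obtain ⟨j, ⟨e⟩⟩ := hall (FDRep.of ρ) (irr_simple ρ)
    have := FDRep.char_iso e
    rw [← hzero j, this]
    rfl
  have hreg := class_fun_zero (Representation.ofMulAction ℂ G G) f (by
    intro U hU u hu
    have := restrRep_irr _ _ U hU
    let σ : Representation ℂ G U :=
      (restrRep (Representation.ofMulAction ℂ G G) ⊤ U hU.1).comp
        (Subgroup.topEquiv (G := G)).symm.toMonoidHom
    have hσ : σ.IsIrreducible := by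
      refine { exists_pair_ne := ⟨⊥, ⊤, ?_⟩, eq_bot_or_eq_top := ?_ }
      · obtain ⟨x, hx, hx0⟩ := Submodule.exists_mem_ne_zero_of_ne_bot hU.2.1
        intro h
        have h1 : (⟨x, hx⟩ : U) ∈ (⊤ : Subrepresentation σ) := by
          show _ ∈ (⊤ : Submodule ℂ U); trivial
        rw [← h] at h1
        have h2 : (⟨x, hx⟩ : U) ∈ (⊥ : Submodule ℂ U) := h1
        rw [Submodule.mem_bot] at h2
        exact hx0 (congrArg Subtype.val h2)
      · intro Y
        let Y' : Subrepresentation (restrRep (Representation.ofMulAction ℂ G G) ⊤ U hU.1) :=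
          ⟨Y.toSubmodule, fun g v hv => Y.apply_mem_toSubmodule (g : G) hv⟩
        rcases eq_bot_or_eq_top Y' with h | h
        · exact Or.inl (Subrepresentation.toSubmodule_injective
            (show Y'.toSubmodule = ⊥ by rw [h]; rfl))
        · exact Or.inr (Subrepresentation.toSubmodule_injective
            (show Y'.toSubmodule = ⊤ by rw [h]; rfl))
    have h := class_fun_irr σ f hf (hzero' σ) ⟨u, hu⟩
    have h' := congrArg U.subtype h
    simp only [map_sum, map_smul, map_zero] at h'
    exact h') (MonoidAlgebra.single (1 : G) (1 : ℂ))
  have hfg : f g = 0 := by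
    have := congrArg (fun x : MonoidAlgebra ℂ G => x.coeff g⁻¹) hreg
    simp only [Representation.ofMulAction_single, MonoidAlgebra.coeff_sum,
      MonoidAlgebra.coeff_smul, MonoidAlgebra.coeff_single, Finsupp.finset_sum_apply,
      Finsupp.smul_apply, Finsupp.single_apply, smul_eq_mul, mul_one, inv_inj] at this
    simpa using this
  exact sub_eq_zero.mp hfg

end FinalPart

theorem Wreath.chain_le (r n i : ℕ) : Wreath.chain r n i ≤ Wreath.chain r n (i + 1) := by
  cases i with
  | zero => exact bot_le
  | succ k => exact fun v hv i hi => hv i (by omega)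

/-- **Dimension of the Gelfand model** (Corollary `t.dim`): the sum of the dimensions
of all irreducible complex representations of `G(r,n)` (i.e. `∑_{χ∈Irr} χ(id)`)
equals the number of absolute involutions in `G(r,n)`. -/
theorem model_dimension_eq_card_absolute_involutions
    (r n : ℕ) [NeZero r] (hn : 0 < n)
    {ι : Type} [Fintype ι] (V : ι → FDRep ℂ (Wreath r n))
    (hV : IsCompleteIrrFamily V) :
    ∑ i, (V i).character 1 =
      (Nat.card {v : Wreath r n // v * Wreath.bar v = 1} : ℂ) := by
  classical
  have hcard : (Fintype.card (Wreath r n) : ℂ) ≠ 0 := Nat.cast_ne_zero.mpr Fintype.card_ne_zero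
  have hfs : ∀ i, ∑ g : Wreath r n, (V i).character (g * Wreath.bar g) =
      (Fintype.card (Wreath r n) : ℂ) := by
    intro i
    have := hV.1 i
    exact twisted_fs (V i) Wreath.barAut (Wreath.chain r n) rfl Wreath.chain_bar
      (Wreath.chain_le r n) Wreath.chain_conj n Wreath.chain_top
  apply mul_right_cancel₀ hcard
  rw [Finset.sum_mul]
  have h1 : ∀ i, (V i).character 1 * (Fintype.card (Wreath r n) : ℂ) =
      ∑ g : Wreath r n, (V i).character 1 * (V i).character (g * Wreath.bar g) := by
    intro i
    rw [← Finset.mul_sum, hfs]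
  rw [Finset.sum_congr rfl fun i _ => h1 i, Finset.sum_comm]
  simp_rw [regular_char V hV]
  rw [← Finset.sum_filter, Finset.sum_const, nsmul_eq_mul, Nat.card_eq_fintype_card,
    Fintype.card_subtype]
end

section
/- (Bump–Ginzburg generalized Frobenius–Schur formula) Let G be a finite group, let τ be an automorphism of G with τ² = id, and let z ∈ G with z² = id. If ∑_{χ ∈ Irr(G)} χ(id) = #{ w ∈ G : w·τ(w) = z }, then for every g ∈ G, ∑_{χ ∈ Irr(G)} χ(g) = #{ w ∈ G : w·τ(w) = g·z }. -/
open CategoryTheory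

open Module


theorem bg_trace_swap {V : Type} [AddCommGroup V] [Module ℂ V] [FiniteDimensional ℂ V]
    (A B : V →ₗ[ℂ] V) :
    LinearMap.trace ℂ _ ((TensorProduct.comm ℂ V V).toLinearMap ∘ₗ TensorProduct.map A B) =
      LinearMap.trace ℂ V (A * B) := by
  classical
  let b := Module.finBasis ℂ V
  rw [LinearMap.trace_eq_matrix_trace ℂ (b.tensorProduct b), LinearMap.trace_eq_matrix_trace ℂ b,
    LinearMap.toMatrix_mul]
  simp only [Matrix.trace, Matrix.diag, LinearMap.toMatrix_apply, Matrix.mul_apply,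
    Fintype.sum_prod_type]
  rw [Finset.sum_comm]
  simp

theorem bg_simple_of_irred {G : Type} [Group G] [Fintype G] {V : Type} [AddCommGroup V]
    [Module ℂ V] [FiniteDimensional ℂ V] (ρ : Representation ℂ G V) [ρ.IsIrreducible] :
    Simple (FDRep.of ρ) := by
  have := invertibleOfNonzero (NeZero.ne (Nat.card G : ℂ))
  rw [FDRep.simple_iff_char_is_norm_one]
  have h := Representation.card_inv_mul_sum_char_mul_char_eq_finrank ρ ρ
  rw [Representation.IsIrreducible.finrank_intertwiningMap_self, Nat.cast_one,
    inv_mul_eq_one₀ (NeZero.ne _)] at h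
  exact h.symm

theorem bg_fs {G : Type} [Group G] [Fintype G] (τ : G ≃* G) (hτ : ∀ g, τ (τ g) = g)
    (V : FDRep ℂ G) [Simple V] :
    ∃ e : ℂ, (e = 0 ∨ e = 1 ∨ e = -1) ∧
      ∑ w : G, V.character (w * τ w) = Nat.card G * e := by
  classical
  have := invertibleOfNonzero (NeZero.ne (Nat.card G : ℂ))
  have : Invertible (Fintype.card G : ℂ) := by rwa [Fintype.card_eq_nat_card]
  have hN : (Nat.card G : ℂ) ≠ 0 := NeZero.ne _
  let ρ : Representation ℂ G V := V.ρ
  let σ : Representation ℂ G V := ρ.comp τ.toMonoidHom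
  let D : FDRep ℂ G := FDRep.of σ.dual
  have hD : ∀ g, D.character g = V.character (τ g⁻¹) := fun g => by
    exact Representation.char_dual σ g
  have hDs : Simple D := by
    rw [FDRep.simple_iff_char_is_norm_one]
    have h := (FDRep.simple_iff_char_is_norm_one V).1 inferInstance
    rw [← h]
    simp only [hD, map_inv, inv_inv]
    rw [← τ.toEquiv.sum_comp]
    exact Finset.sum_congr rfl fun x _ => by
      have : τ (τ.toEquiv x) = x := hτ x
      rw [this, mul_comm]
  let π := Representation.tprod ρ σ
  have hfin : finrank ℂ π.invariants = 0 ∨ finrank ℂ π.invariants = 1 := by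
    have h1 := Representation.card_inv_mul_sum_char_eq_finrank π
    have h2 := FDRep.char_orthonormal V D
    have h3 : ∑ g, π.character g = ∑ g, V.character g * D.character g⁻¹ := by
      refine Finset.sum_congr rfl fun g _ => ?_
      rw [hD, inv_inv, Representation.char_tensor]
      rfl
    rw [h3, h2] at h1
    split_ifs at h1
    · right; exact_mod_cast h1.symm
    · left; exact_mod_cast h1.symm
  let S := (TensorProduct.comm ℂ V V).toLinearMap
  have hSS : ∀ x, S (S x) = x := fun x => by
    simp [S]
  have hSπ : ∀ g x, S (π g x) = π (τ g) (S x) := by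
    intro g x
    induction x with
    | zero => simp
    | add x y hx hy => simp [hx, hy]
    | tmul x y => simp [S, π, σ, hτ]
  have hP := Representation.isProj_averageMap π
  have hSP : ∑ w : G, V.character (w * τ w) =
      Nat.card G * LinearMap.trace ℂ _ (S ∘ₗ π.averageMap) := by
    have : ∀ w, V.character (w * τ w) = LinearMap.trace ℂ _ (S ∘ₗ π w) := by
      intro w
      have := bg_trace_swap (ρ w) (σ w)
      exact (congrArg _ (map_mul V.ρ w (τ w))).trans this.symm
    simp only [this]
    rw [← map_sum]
    have h4 : ∑ w, S ∘ₗ π w = S ∘ₗ ∑ w, π w := (Finset.mul_sum (R := Module.End ℂ _) _ _ S).symm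
    rw [h4]
    simp [GroupAlgebra.average, LinearMap.comp_smul]
  rw [hSP]
  refine ⟨_, ?_, rfl⟩
  have hSinv : ∀ x ∈ π.invariants, S x ∈ π.invariants := by
    intro x hx g
    have := hSπ (τ g) x
    rw [hτ, hx (τ g)] at this
    exact this.symm
  rcases hfin with h0 | h1
  · left
    have hb := Submodule.finrank_eq_zero.1 h0
    have : π.averageMap = 0 := by
      ext1
      ext x y
      have := hP.map_mem (x ⊗ₜ y)
      rw [hb] at this
      simpa using this
    rw [this]; simp
  · right
    obtain ⟨⟨b, hbm⟩, hb0, hb⟩ := finrank_eq_one_iff'.1 h1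
    obtain ⟨c, hc⟩ := hb ⟨S b, hSinv b hbm⟩
    have hc : c • b = S b := congrArg Subtype.val hc
    have hb0 : b ≠ 0 := fun h => hb0 (Subtype.ext h)
    have hcc : c * c = 1 := by
      have : (c * c) • b = (1 : ℂ) • b := by
        rw [one_smul, mul_smul, hc, ← map_smul, hc, hSS]
      exact smul_left_injective ℂ hb0 this
    have hE : S ∘ₗ π.averageMap = c • π.averageMap := by
      apply LinearMap.ext
      intro x
      obtain ⟨d, hd⟩ := hb ⟨_, hP.map_mem x⟩
      have hd : d • b = π.averageMap x := congrArg Subtype.val hd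
      simp only [LinearMap.comp_apply, LinearMap.smul_apply, ← hd, map_smul, ← hc]
      rw [smul_comm]
    rw [hE, map_smul, hP.trace, h1]
    have := mul_self_eq_one_iff.1 hcc
    simpa using this

theorem bg_scalar {G : Type} [Group G] [Fintype G] (V : FDRep ℂ G) [Simple V]
    (A : V →ₗ[ℂ] V) (hA : ∀ g, A ∘ₗ V.ρ g = V.ρ g ∘ₗ A) (h0 : LinearMap.trace ℂ V A = 0) :
    A = 0 := by
  have := invertibleOfNonzero (NeZero.ne (Nat.card G : ℂ))
  let ρ : Representation ℂ G V := V.ρ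
  have h := Representation.card_inv_mul_sum_char_mul_char_eq_finrank ρ ρ
  have h' := (FDRep.simple_iff_char_is_norm_one V).1 inferInstance
  have h'' : ∑ g : G, ρ.character g * ρ.character g⁻¹ = Nat.card G := h'
  rw [h'', inv_mul_cancel_of_invertible] at h
  have h1 : finrank ℂ (Representation.IntertwiningMap ρ ρ) = 1 := by exact_mod_cast h.symm
  obtain ⟨b, hb0, hb⟩ := finrank_eq_one_iff'.1 h1
  obtain ⟨c, hc⟩ := hb (Representation.IntertwiningMap.id ρ)
  obtain ⟨d, hd⟩ := hb ⟨A, hA⟩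
  have hc : c • b.toLinearMap = LinearMap.id := congrArg (·.toLinearMap) hc
  have hd : d • b.toLinearMap = A := congrArg (·.toLinearMap) hd
  have hA1 : c • A = d • LinearMap.id := by rw [← hd, ← hc, smul_comm]
  have hc0 : c ≠ 0 := by
    rintro rfl
    rw [zero_smul] at hc
    apply hb0
    ext x
    have : x = 0 := (LinearMap.congr_fun hc x).symm
    simp [this]
  have := congrArg (LinearMap.trace ℂ V) hA1
  rw [map_smul, map_smul, h0, smul_zero, LinearMap.trace_id, smul_eq_mul, eq_comm, mul_eq_zero] at this
  rcases this with hd0 | hn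
  · rw [← hd, hd0, zero_smul]
  · have : finrank ℂ V = 0 := by exact_mod_cast hn
    have := Module.finrank_zero_iff.1 this
    exact Subsingleton.elim _ _

theorem bg_trace_invol {V : Type} [AddCommGroup V] [Module ℂ V] [FiniteDimensional ℂ V]
    (Z : V →ₗ[ℂ] V) (hZ : Z * Z = 1) :
    ∃ k : ℕ, k ≤ finrank ℂ V ∧ LinearMap.trace ℂ V Z = 2 * k - finrank ℂ V ∧
      (k = 0 → Z = -1) ∧ (k = finrank ℂ V → Z = 1) := by
  let p : V →ₗ[ℂ] V := (2⁻¹ : ℂ) • (1 + Z)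
  have hZp : Z = (2 : ℂ) • p - 1 := by simp [p]
  have hp : LinearMap.IsProj (LinearMap.range p) p := by
    constructor
    · intro x; exact LinearMap.mem_range_self p x
    · rintro _ ⟨x, rfl⟩
      have h : p * p = p := by
        simp only [p, smul_mul_smul_comm, mul_add, add_mul, hZ, one_mul, mul_one]
        module
      exact LinearMap.congr_fun h x
  refine ⟨finrank ℂ (LinearMap.range p), Submodule.finrank_le _, ?_, ?_, ?_⟩
  · rw [← hp.trace, hZp]
    simp
  · intro h
    have := LinearMap.range_eq_bot.1 (Submodule.finrank_eq_zero.1 h)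
    rw [hZp, this]; simp
  · intro h
    have h := Submodule.eq_top_of_finrank_eq h
    have : p = 1 := by
      ext x
      exact hp.map_id x (h ▸ Submodule.mem_top)
    rw [hZp, this]; module

theorem bg_kill {G : Type} [Group G] [Fintype G] (M : Type) [AddCommGroup M] [Module ℂ M]
    [Module (MonoidAlgebra ℂ G) M] [IsScalarTower ℂ (MonoidAlgebra ℂ G) M]
    [hs : IsSimpleModule (MonoidAlgebra ℂ G) M]
    (a : MonoidAlgebra ℂ G)
    (ha : ∀ W : FDRep ℂ G, Simple W → Representation.asAlgebraHom W.ρ a = 0) (x : M) :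
    a • x = 0 := by
  have : Module.Finite ℂ (MonoidAlgebra ℂ G) := inferInstance
  have : FiniteDimensional ℂ M := Module.Finite.trans (MonoidAlgebra ℂ G) _
  let R : Representation ℂ G M := Representation.ofModule' (k := ℂ) (G := G) M
  have hR : R.asAlgebraHom = Algebra.lsmul ℂ ℂ M :=
    (MonoidAlgebra.lift ℂ (M →ₗ[ℂ] M) G).apply_symm_apply _
  have hR' : ∀ (b : MonoidAlgebra ℂ G) (y : M), R.asAlgebraHom b y = b • y := by
    intro b y; rw [hR]; rfl
  let E : R.asModule ≃ₗ[MonoidAlgebra ℂ G] M :=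
    { R.asModuleEquiv.toAddEquiv with
      map_smul' := fun b y => (R.asModuleEquiv_map_smul b y).trans (hR' _ _) }
  have hsR : IsSimpleModule (MonoidAlgebra ℂ G) R.asModule := IsSimpleModule.congr E
  have hirr : R.IsIrreducible := (Representation.irreducible_iff_isSimpleModule_asModule R).2 hsR
  have h2 : R.asAlgebraHom a = 0 := ha (FDRep.of R) (bg_simple_of_irred R)
  rw [← hR', h2]; rfl

theorem bg_complete {G : Type} [Group G] [Fintype G] (f : G → ℂ)
    (hf : ∀ g h, f (h * g * h⁻¹) = f g)
    (h0 : ∀ W : FDRep ℂ G, Simple W → ∑ x, f x * W.character x⁻¹ = 0) : f = 0 := by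
  classical
  let a : MonoidAlgebra ℂ G := ∑ x, MonoidAlgebra.single x⁻¹ (f x)
  have hW : ∀ W : FDRep ℂ G, Simple W → ∑ x, f x • W.ρ x⁻¹ = 0 := by
    intro W hWs
    apply bg_scalar W
    · intro g
      have e1 : (∑ x, f x • W.ρ x⁻¹) ∘ₗ W.ρ g = ∑ x, f x • W.ρ (x⁻¹ * g) := by
        refine (Finset.sum_mul (R := Module.End ℂ W) _ _ (W.ρ g)).trans ?_
        refine Finset.sum_congr rfl fun x _ => ?_
        rw [smul_mul_assoc, ← map_mul]
      have e2 : W.ρ g ∘ₗ (∑ x, f x • W.ρ x⁻¹) = ∑ x, f x • W.ρ (g * x⁻¹) := by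
        refine (Finset.mul_sum (R := Module.End ℂ W) _ _ (W.ρ g)).trans ?_
        refine Finset.sum_congr rfl fun x _ => ?_
        rw [mul_smul_comm, ← map_mul]
      rw [e1, e2, ← (MulAut.conj g).toEquiv.sum_comp]
      refine Finset.sum_congr rfl fun x _ => ?_
      have : (MulAut.conj g).toEquiv x = g * x * g⁻¹ := rfl
      rw [this, hf]
      congr 2
      group
    · rw [map_sum, ← h0 W hWs]
      refine Finset.sum_congr rfl fun x _ => ?_
      rw [map_smul]; rfl
  have ha : a = 0 := by
    have hj := IsSemisimpleRing.jacobson_eq_bot (MonoidAlgebra ℂ G)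
    have : a ∈ Ring.jacobson (MonoidAlgebra ℂ G) := by
      refine (Submodule.mem_sInf).2 fun m hm => ?_
      have hs : IsSimpleModule (MonoidAlgebra ℂ G) (MonoidAlgebra ℂ G ⧸ m) :=
        isSimpleModule_iff_isCoatom.2 hm
      have h4 := bg_kill (MonoidAlgebra ℂ G ⧸ m) a (fun W hWs => by
        rw [← hW W hWs]
        simp only [a, map_sum]
        exact Finset.sum_congr rfl fun x _ => Representation.asAlgebraHom_single _ _ _)
        (Submodule.Quotient.mk 1)
      rw [← Submodule.Quotient.mk_smul, Submodule.Quotient.mk_eq_zero, smul_eq_mul, mul_one] at h4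
      exact h4
    rw [hj] at this
    simpa using this
  funext x
  have : a.coeff x⁻¹ = f x := by
    have h5 := map_sum (MonoidAlgebra.coeffAddEquiv (R := ℂ) (M := G))
      (fun x : G => MonoidAlgebra.single x⁻¹ (f x)) Finset.univ
    have h6 : a.coeff = ∑ x : G, Finsupp.single x⁻¹ (f x) := h5
    rw [h6, Finsupp.finsetSum_apply]
    simp [Finsupp.single_apply]
  rw [← this, ha]; rfl

/-- **Bump–Ginzburg generalized Frobenius–Schur formula** (Proposition `t.bg1`):
let `G` be a finite group, `τ` an automorphism of `G` with `τ² = 1`, and `z ∈ G`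
with `z² = id`.  If `∑_{χ∈Irr(G)} χ(id) = #{w ∈ G : w·τ(w) = z}`, then for every
`g ∈ G`, `∑_{χ∈Irr(G)} χ(g) = #{w ∈ G : w·τ(w) = g·z}`. -/
theorem bump_ginzburg
    (G : Type) [Group G] [Fintype G]
    (τ : G ≃* G) (hτ : ∀ g, τ (τ g) = g)
    (z : G) (hz : z * z = 1)
    {ι : Type} [Fintype ι] (V : ι → FDRep ℂ G)
    (hV : IsCompleteIrrFamily V)
    (hdim : ∑ i, (V i).character 1 = (Nat.card {w : G // w * τ w = z} : ℂ)) :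
    ∀ g : G, ∑ i, (V i).character g =
      (Nat.card {w : G // w * τ w = g * z} : ℂ) := by
  
  classical
  have := invertibleOfNonzero (NeZero.ne (Nat.card G : ℂ))
  have hN : (Nat.card G : ℂ) ≠ 0 := NeZero.ne _
  obtain ⟨hs, hinj, hsurj⟩ := hV
  choose e he hsum using fun i => bg_fs τ hτ (V i)
  let N : G → ℂ := fun x => (Nat.card {w : G // w * τ w = x} : ℂ)
  have hNval : ∀ x, N x = ∑ w : G, if w * τ w = x then (1 : ℂ) else 0 := by
    intro x
    simp only [N, Finset.sum_boole, Nat.card_eq_fintype_card, Fintype.card_subtype]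
  have hNconj : ∀ g h, N (h * g * h⁻¹) = N g := by
    intro g h
    simp only [N]
    congr 1
    symm
    refine Nat.card_congr
      (((Equiv.mulLeft h).trans (Equiv.mulRight (τ h)⁻¹)).subtypeEquiv fun w => ?_)
    have : h * w * (τ h)⁻¹ * τ (h * w * (τ h)⁻¹) = h * (w * τ w) * h⁻¹ := by
      simp only [map_mul, map_inv, hτ]; group
    change w * τ w = g ↔ h * w * (τ h)⁻¹ * τ (h * w * (τ h)⁻¹) = h * g * h⁻¹
    rw [this]
    simp
  have horth : ∀ i j, ∑ x, (V i).character x * (V j).character x⁻¹ =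
      if i = j then (Nat.card G : ℂ) else 0 := by
    intro i j
    have h := FDRep.char_orthonormal (V i) (V j)
    rw [inv_mul_eq_iff_eq_mul₀ hN] at h
    rw [h]
    by_cases hij : i = j
    · subst hij
      rw [if_pos ⟨Iso.refl _⟩, if_pos rfl]; simp
    · rw [if_neg (fun hh => hij (hinj _ _ hh)), if_neg hij]; simp
  have hNsum : ∀ j, ∑ x, N x * (V j).character x⁻¹ = Nat.card G * e j := by
    intro j
    simp only [hNval, Finset.sum_mul, ite_mul, one_mul, zero_mul]
    rw [Finset.sum_comm]
    simp only [Finset.sum_ite_eq, Finset.mem_univ, if_true]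
    rw [← hsum, ← (τ.toEquiv.trans (Equiv.inv G)).sum_comp
      (fun w => (V j).character (w * τ w))]
    refine Finset.sum_congr rfl fun w _ => ?_
    simp [hτ]
  have hexp : ∀ x, N x = ∑ i, e i * (V i).character x := by
    have := bg_complete (fun x => N x - ∑ i, e i * (V i).character x)
      (fun g h => by simp only [hNconj, FDRep.char_conj]) (fun W hW => by
        obtain ⟨j, ⟨φ⟩⟩ := hsurj W hW
        rw [← FDRep.char_iso φ]
        simp only [sub_mul, Finset.sum_sub_distrib, hNsum, Finset.sum_mul]
        rw [Finset.sum_comm]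
        simp only [mul_assoc, ← Finset.mul_sum, horth]
        simp [mul_comm])
    intro x
    exact sub_eq_zero.1 (congrFun this x)
  have hinv : ∀ i, (V i).ρ z * (V i).ρ z = 1 := fun i => by rw [← map_mul, hz, map_one]
  choose k hk htr hk0 hk1 using fun i => bg_trace_invol ((V i).ρ z) (hinv i)
  have hchz : ∀ i, (V i).character z = 2 * k i - finrank ℂ (V i) := htr
  -- real comparison
  have hre : ∀ i, (e i * (V i).character z).re ≤ finrank ℂ (V i) := by
    intro i
    have h1 : (k i : ℝ) ≤ finrank ℂ (V i) := by exact_mod_cast hk i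
    have h2 : (0 : ℝ) ≤ k i := by positivity
    rw [hchz]
    rcases he i with h | h | h <;> rw [h] <;> simp <;> linarith
  have hz' : ∑ i, (V i).character 1 = ∑ i, e i * (V i).character z := by
    rw [hdim]; exact hexp z
  have hre2 : ∑ i, (e i * (V i).character z).re = ∑ i, (finrank ℂ (V i) : ℝ) := by
    have := congrArg Complex.re hz'
    simp only [FDRep.char_one, Complex.re_sum, Complex.natCast_re] at this
    exact this.symm
  have heq := (Finset.sum_eq_sum_iff_of_le (fun i _ => hre i)).1 hre2
  have hscal : ∀ i, e i * e i = 1 ∧ (V i).ρ z = e i • 1 := by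
    intro i
    have hi := heq i (Finset.mem_univ i)
    have hpos : 0 < finrank ℂ (V i) := by
      rcases Nat.eq_zero_or_pos (finrank ℂ (V i)) with h | h
      · exfalso
        have h1 := (FDRep.simple_iff_char_is_norm_one (V i)).1 (hs i)
        have := Module.finrank_zero_iff.1 h
        have h2 : ∀ g, (V i).character g = 0 := fun g => by
          have : (V i).ρ g = 0 := Subsingleton.elim _ _
          simp [FDRep.character, this]
        simp only [h2, mul_zero, Finset.sum_const_zero] at h1
        exact hN h1.symm
      · exact h
    rw [hchz] at hi
    rcases he i with h | h | h
    · rw [h] at hi; simp at hi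
      exact absurd hi.symm (by exact_mod_cast hpos.ne')
    · rw [h] at hi ⊢
      simp at hi
      have : k i = finrank ℂ (V i) := by
        have : (k i : ℝ) = finrank ℂ (V i) := by linarith
        exact_mod_cast this
      rw [hk1 i this]; simp
    · rw [h] at hi ⊢
      simp at hi
      rw [hk0 i hi]; simp
  intro g
  have := hexp (g * z)
  simp only [N] at this
  rw [this]
  refine Finset.sum_congr rfl fun i _ => ?_
  obtain ⟨h1, h2⟩ := hscal i
  have h3 : (V i).character (g * z) = e i * (V i).character g := by
    simp only [FDRep.character, map_mul, h2]
    rw [mul_smul_comm, mul_one, map_smul, smul_eq_mul]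
  rw [h3, ← mul_assoc, h1, one_mul]
end
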